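/- Let {e₁,e₂,e₃} be the standard orthonormal basis of V = ℝ³ and suppose (K,S) is in orthogonal-triple canonical form with parameters (λ,a,b,c), where either λ > 0 and a, b, c are not all equal, or λ = 0 and a, b, c are pairwise distinct. Then the stabilizer of (K,S) in SO(3) is exactly the order-4 subgroup {id, P₁, P₂, P₃}, which is isomorphic to Z₂ × Z₂. -/

import Mathlib

/-!
The proof works with the matrix `m` of an isometry `g` in the standard basis.

Commuting with `S = diag(a,b,c)` kills every entry `m i j` whose row and column belong to
different eigenvalues.  If `λ = 0` the eigenvalues are distinct, so `m` is diagonal.  If `λ > 0`,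
one eigenvalue is simple, so `m` splits into a `1 × 1` and a `2 × 2` block.  Invariance of
`K(eᵢ,eᵢ) = 0` leaves a single non-zero entry in the first column of the `2 × 2` block; if it were
the off-diagonal one, invariance of `K(eᵢ,eⱼ) = λ eₖ` would make `det m` non-positive
(`offdiag_zero`).  A diagonal orthogonal matrix of determinant `1` is one of
`1, P₁, P₂, P₃` (`diag_mem_klein`).

For the group structure, `g ↦ m` is injective and hits all four matrices, so the stabilizer has
order 4, and every element squares to `1`; these two properties characterise the Klein four-group.
-/


/-!
Setting (affine hypersurfaces admitting a pointwise symmetry, algebraic part):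
`V₃ = ℝ³` with its standard inner product `h = ⟪·,·⟫`.  `K` is a symmetric bilinear
map `V₃ × V₃ → V₃` whose cubic form `h(K(X,Y),Z)` is totally symmetric and which
satisfies the apolarity condition (`K_X` trace-free), `S` is an `h`-symmetric
endomorphism.  `stab K S` is the stabilizer of the pair `(K,S)` inside `SO(3)`.
-/

noncomputable section

open scoped RealInnerProductSpace

/-- The 3-dimensional Euclidean space `ℝ³` with its standard inner product. -/
abbrev V₃ := EuclideanSpace ℝ (Fin 3)

/-- A symmetric bilinear map `K` is admissible (a difference tensor) if the cubic form
`(X,Y,Z) ↦ ⟪K X Y, Z⟫` is totally symmetric and `K_X := K X ·` is trace-free for all `X`. -/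
def IsAdmissibleK (K : V₃ →ₗ[ℝ] V₃ →ₗ[ℝ] V₃) : Prop :=
  (∀ X Y, K X Y = K Y X) ∧
  (∀ X Y Z, ⟪K X Y, Z⟫ = ⟪K X Z, Y⟫) ∧
  (∀ X, LinearMap.trace ℝ V₃ (K X) = 0)

/-- `S` is a symmetric endomorphism with respect to the inner product. -/
def IsSymmEndo (S : V₃ →ₗ[ℝ] V₃) : Prop := ∀ X Y, ⟪S X, Y⟫ = ⟪X, S Y⟫

/-- The stabilizer of the pair `(K,S)` inside `SO(3)`: all orientation-preserving
(i.e. determinant `1`) linear isometries `g` of `ℝ³` with `K(gX,gY) = g(K(X,Y))`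
and `S(gX) = g(SX)` for all `X, Y`. -/
def stab (K : V₃ →ₗ[ℝ] V₃ →ₗ[ℝ] V₃) (S : V₃ →ₗ[ℝ] V₃) : Set (V₃ ≃ₗᵢ[ℝ] V₃) :=
  {g | LinearMap.det (g.toLinearEquiv : V₃ →ₗ[ℝ] V₃) = 1 ∧
    (∀ X Y, K (g X) (g Y) = g (K X Y)) ∧ (∀ X, S (g X) = g (S X))}

/-- The matrix of `g` with respect to the orthonormal basis `e`: column `j` consists of
the coordinates of `g (e j)` in the basis `e`. -/
def matrixOf (e : OrthonormalBasis (Fin 3) ℝ V₃) (g : V₃ ≃ₗᵢ[ℝ] V₃) :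
    Matrix (Fin 3) (Fin 3) ℝ :=
  Matrix.of fun i j => ⟪e i, g (e j)⟫

/-- The standard orthonormal basis `{e₁, e₂, e₃}` of `ℝ³`. -/
def stdB : OrthonormalBasis (Fin 3) ℝ V₃ := EuclideanSpace.basisFun (Fin 3) ℝ

/-- Matrix of the rotation by angle `θ` about the first basis vector `e₁`. -/
def rotMat (θ : ℝ) : Matrix (Fin 3) (Fin 3) ℝ :=
  !![1, 0, 0; 0, Real.cos θ, -Real.sin θ; 0, Real.sin θ, Real.cos θ]

/-- Matrix of the rotation by angle `π` about the axis `cos (θ/2) e₂ + sin (θ/2) e₃`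
in the plane orthogonal to `e₁`. -/
def flipMat (θ : ℝ) : Matrix (Fin 3) (Fin 3) ℝ :=
  !![-1, 0, 0; 0, Real.cos θ, Real.sin θ; 0, Real.sin θ, -Real.cos θ]

/-- The set of all rotations about the axis `e 0` (the first vector of the basis `e`). -/
def rotSet (e : OrthonormalBasis (Fin 3) ℝ V₃) : Set (V₃ ≃ₗᵢ[ℝ] V₃) :=
  {g | ∃ θ : ℝ, matrixOf e g = rotMat θ}

/-- The set of all rotations by angle `π` about axes orthogonal to `e 0`. -/
def flipSet (e : OrthonormalBasis (Fin 3) ℝ V₃) : Set (V₃ ≃ₗᵢ[ℝ] V₃) :=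
  {g | ∃ θ : ℝ, matrixOf e g = flipMat θ}

/-- The whole of `SO(3)`, as a set of linear isometries of `ℝ³`. -/
def so3Set : Set (V₃ ≃ₗᵢ[ℝ] V₃) :=
  {g | LinearMap.det (g.toLinearEquiv : V₃ →ₗ[ℝ] V₃) = 1}

/-- Matrix of `P₁`, the rotation by angle `π` about `e₁`. -/
def P1mat : Matrix (Fin 3) (Fin 3) ℝ := !![1, 0, 0; 0, -1, 0; 0, 0, -1]

/-- Matrix of `P₂`, the rotation by angle `π` about `e₂`. -/
def P2mat : Matrix (Fin 3) (Fin 3) ℝ := !![-1, 0, 0; 0, 1, 0; 0, 0, -1]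

/-- Matrix of `P₃`, the rotation by angle `π` about `e₃`. -/
def P3mat : Matrix (Fin 3) (Fin 3) ℝ := !![-1, 0, 0; 0, -1, 0; 0, 0, 1]

/-- Matrix of `R₁`, the rotation by angle `2π/3` about `e₁`. -/
def R1mat : Matrix (Fin 3) (Fin 3) ℝ :=
  !![1, 0, 0; 0, -(1/2), -(Real.sqrt 3/2); 0, Real.sqrt 3/2, -(1/2)]

/-- Matrix of `R₃`, the rotation by angle `2π/3` about `e₃`. -/
def R3mat : Matrix (Fin 3) (Fin 3) ℝ :=
  !![-(1/2), -(Real.sqrt 3/2), 0; Real.sqrt 3/2, -(1/2), 0; 0, 0, 1]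

/-- Matrix of `Q`, the rotation by angle `2π/3` about the axis `e₁ + e₂ + e₃`
(the cyclic permutation `e₁ ↦ e₂ ↦ e₃ ↦ e₁`). -/
def Qmat : Matrix (Fin 3) (Fin 3) ℝ := !![0, 0, 1; 1, 0, 0; 0, 1, 0]

/-- The matrices of the Klein four-group `{id, P₁, P₂, P₃} ≅ Z₂ × Z₂`. -/
def kleinMatSet : Set (Matrix (Fin 3) (Fin 3) ℝ) := {1, P1mat, P2mat, P3mat}

/-- The matrices of the order-6 group `⟨P₁, R₃⟩ ≅ S₃`. -/
def s3MatSet : Set (Matrix (Fin 3) (Fin 3) ℝ) :=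
  {1, R3mat, R3mat * R3mat, P1mat, P1mat * R3mat, R3mat * P1mat}

/-- The matrices of the order-12 group `⟨P₁, P₂, Q⟩ ≅ A₄`. -/
def a4MatSet : Set (Matrix (Fin 3) (Fin 3) ℝ) :=
  {1, P1mat, P2mat, P3mat, Qmat, Qmat * Qmat,
   P1mat * Qmat, P2mat * Qmat, P3mat * Qmat,
   Qmat * Qmat * P1mat, Qmat * Qmat * P2mat, Qmat * Qmat * P3mat}

/-- The matrices of the order-3 group `{id, R₁, R₁²} ≅ Z₃`. -/
def z3MatSet : Set (Matrix (Fin 3) (Fin 3) ℝ) := {1, R1mat, R1mat * R1mat}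

/-- The matrices of the order-2 group `{id, P₁} ≅ Z₂`. -/
def z2MatSet : Set (Matrix (Fin 3) (Fin 3) ℝ) := {1, P1mat}

/-- The pair `(K,S)` is in `Z₂`-canonical form with parameters `(lam, mu, a, b, c, d)`
with respect to the orthonormal basis `e`. -/
def Z2Form (K : V₃ →ₗ[ℝ] V₃ →ₗ[ℝ] V₃) (S : V₃ →ₗ[ℝ] V₃)
    (e : OrthonormalBasis (Fin 3) ℝ V₃) (lam mu a b c d : ℝ) : Prop :=
  K (e 0) (e 0) = (2*lam) • e 0 ∧
  K (e 0) (e 1) = (-lam) • e 1 + mu • e 2 ∧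
  K (e 0) (e 2) = mu • e 1 + (-lam) • e 2 ∧
  K (e 1) (e 1) = (-lam) • e 0 ∧
  K (e 1) (e 2) = mu • e 0 ∧
  K (e 2) (e 2) = (-lam) • e 0 ∧
  S (e 0) = a • e 0 ∧ S (e 1) = b • e 1 + d • e 2 ∧ S (e 2) = d • e 1 + c • e 2

/-- The pair `(K,S)` is in `Z₃`-canonical form with parameters `(lam, mu, a, b)`
with respect to the orthonormal basis `e`. -/
def Z3Form (K : V₃ →ₗ[ℝ] V₃ →ₗ[ℝ] V₃) (S : V₃ →ₗ[ℝ] V₃)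
    (e : OrthonormalBasis (Fin 3) ℝ V₃) (lam mu a b : ℝ) : Prop :=
  K (e 0) (e 0) = (2*lam) • e 0 ∧
  K (e 0) (e 1) = (-lam) • e 1 ∧
  K (e 0) (e 2) = (-lam) • e 2 ∧
  K (e 1) (e 1) = (-lam) • e 0 + mu • e 1 ∧
  K (e 1) (e 2) = (-mu) • e 2 ∧
  K (e 2) (e 2) = (-lam) • e 0 + (-mu) • e 1 ∧
  S (e 0) = a • e 0 ∧ S (e 1) = b • e 1 ∧ S (e 2) = b • e 2

/-- The pair `(K,S)` is in `SO(2)`-canonical form with parameters `(lam, a, b)`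
with respect to the orthonormal basis `e`. -/
def SO2Form (K : V₃ →ₗ[ℝ] V₃ →ₗ[ℝ] V₃) (S : V₃ →ₗ[ℝ] V₃)
    (e : OrthonormalBasis (Fin 3) ℝ V₃) (lam a b : ℝ) : Prop :=
  K (e 0) (e 0) = (2*lam) • e 0 ∧
  K (e 0) (e 1) = (-lam) • e 1 ∧
  K (e 0) (e 2) = (-lam) • e 2 ∧
  K (e 1) (e 1) = (-lam) • e 0 ∧
  K (e 1) (e 2) = 0 ∧
  K (e 2) (e 2) = (-lam) • e 0 ∧
  S (e 0) = a • e 0 ∧ S (e 1) = b • e 1 ∧ S (e 2) = b • e 2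

/-- The pair `(K,S)` is in orthogonal-triple canonical form with parameters `(lam, a, b, c)`
with respect to the orthonormal basis `e`. -/
def OTForm (K : V₃ →ₗ[ℝ] V₃ →ₗ[ℝ] V₃) (S : V₃ →ₗ[ℝ] V₃)
    (e : OrthonormalBasis (Fin 3) ℝ V₃) (lam a b c : ℝ) : Prop :=
  K (e 0) (e 0) = 0 ∧ K (e 1) (e 1) = 0 ∧ K (e 2) (e 2) = 0 ∧
  K (e 0) (e 1) = lam • e 2 ∧
  K (e 0) (e 2) = lam • e 1 ∧
  K (e 1) (e 2) = lam • e 0 ∧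
  S (e 0) = a • e 0 ∧ S (e 1) = b • e 1 ∧ S (e 2) = c • e 2

/-- The pair `(K,S)` is in `S₃`-canonical form with parameters `(lam, a, b)`
with respect to the orthonormal basis `e`. -/
def S3Form (K : V₃ →ₗ[ℝ] V₃ →ₗ[ℝ] V₃) (S : V₃ →ₗ[ℝ] V₃)
    (e : OrthonormalBasis (Fin 3) ℝ V₃) (lam a b : ℝ) : Prop :=
  K (e 0) (e 0) = lam • e 0 ∧
  K (e 0) (e 1) = (-lam) • e 1 ∧
  K (e 1) (e 1) = (-lam) • e 0 ∧
  K (e 0) (e 2) = 0 ∧ K (e 1) (e 2) = 0 ∧ K (e 2) (e 2) = 0 ∧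
  S (e 0) = a • e 0 ∧ S (e 1) = a • e 1 ∧ S (e 2) = b • e 2

theorem stdB_apply (i j : Fin 3) : stdB i j = if j = i then 1 else 0 := by
  simp [stdB]

theorem matrixOf_stdB (g : V₃ ≃ₗᵢ[ℝ] V₃) (i j : Fin 3) :
    matrixOf stdB g i j = g (stdB j) i := by
  simp only [matrixOf, Matrix.of_apply]
  exact EuclideanSpace.basisFun_inner (Fin 3) ℝ (g (stdB j)) i

theorem eq_sum_stdB (X : V₃) : X = X 0 • stdB 0 + X 1 • stdB 1 + X 2 • stdB 2 := by
  ext i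
  fin_cases i <;> simp [stdB_apply]

theorem apply_coord (g : V₃ ≃ₗᵢ[ℝ] V₃) (X : V₃) (i : Fin 3) :
    g X i = matrixOf stdB g i 0 * X 0 + matrixOf stdB g i 1 * X 1
      + matrixOf stdB g i 2 * X 2 := by
  conv_lhs => rw [eq_sum_stdB X]
  simp only [map_add, map_smul, PiLp.add_apply, PiLp.smul_apply, smul_eq_mul, matrixOf_stdB]
  ring

theorem matrixOf_injective : Function.Injective (matrixOf stdB) := by
  intro g g' h
  ext X i
  rw [apply_coord, apply_coord, h]

theorem det_matrixOf (g : V₃ ≃ₗᵢ[ℝ] V₃) :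
    LinearMap.det (g.toLinearEquiv : V₃ →ₗ[ℝ] V₃) = (matrixOf stdB g).det := by
  rw [← LinearMap.det_toMatrix stdB.toBasis]
  congr 1
  ext i j
  rw [matrixOf_stdB, LinearMap.toMatrix_apply]
  simp [stdB]

theorem matrixOf_col_norm (g : V₃ ≃ₗᵢ[ℝ] V₃) (j : Fin 3) :
    matrixOf stdB g 0 j ^ 2 + matrixOf stdB g 1 j ^ 2 + matrixOf stdB g 2 j ^ 2 = 1 := by
  have h : ‖g (stdB j)‖ = 1 := by rw [g.norm_map, stdB.norm_eq_one]
  have h2 : ‖g (stdB j)‖ ^ 2 = 1 := by rw [h, one_pow]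
  rw [EuclideanSpace.norm_sq_eq, Fin.sum_univ_three] at h2
  simpa [matrixOf_stdB] using h2

/-- The coordinate form of a symmetric bilinear `K` in orthogonal-triple form. -/
theorem OTForm.K_coord {K : V₃ →ₗ[ℝ] V₃ →ₗ[ℝ] V₃} {S : V₃ →ₗ[ℝ] V₃} {lam a b c : ℝ}
    (hform : OTForm K S stdB lam a b c) (hK : ∀ X Y, K X Y = K Y X) (X Y : V₃) :
    K X Y 0 = lam * (X 1 * Y 2 + X 2 * Y 1) ∧ K X Y 1 = lam * (X 0 * Y 2 + X 2 * Y 0) ∧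
      K X Y 2 = lam * (X 0 * Y 1 + X 1 * Y 0) := by
  obtain ⟨h00, h11, h22, h01, h02, h12, -⟩ := hform
  have h10 := (hK (stdB 1) (stdB 0)).trans h01
  have h20 := (hK (stdB 2) (stdB 0)).trans h02
  have h21 := (hK (stdB 2) (stdB 1)).trans h12
  have h : K X Y = K (X 0 • stdB 0 + X 1 • stdB 1 + X 2 • stdB 2)
      (Y 0 • stdB 0 + Y 1 • stdB 1 + Y 2 • stdB 2) := by
    rw [← eq_sum_stdB X, ← eq_sum_stdB Y]
  simp only [map_add, map_smul, LinearMap.add_apply, LinearMap.smul_apply,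
    h00, h11, h22, h01, h02, h12, h10, h20, h21] at h
  rw [h]
  simp [stdB_apply]
  refine ⟨?_, ?_, ?_⟩ <;> ring

theorem OTForm.S_coord {K : V₃ →ₗ[ℝ] V₃ →ₗ[ℝ] V₃} {S : V₃ →ₗ[ℝ] V₃} {lam a b c : ℝ}
    (hform : OTForm K S stdB lam a b c) (X : V₃) :
    S X 0 = a * X 0 ∧ S X 1 = b * X 1 ∧ S X 2 = c * X 2 := by
  obtain ⟨-, -, -, -, -, -, h0, h1, h2⟩ := hform
  have h : S X = S (X 0 • stdB 0 + X 1 • stdB 1 + X 2 • stdB 2) := by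
    rw [← eq_sum_stdB X]
  simp only [map_add, map_smul, h0, h1, h2] at h
  rw [h]
  simp [stdB_apply, mul_comm]

/-- The `2 × 2` block `p q / r s` left over once `m` has been split by a simple eigenvalue of `S`,
with remaining diagonal entry `t`, is diagonal.  The hypothesis `hpr` comes from invariance
of `K(eᵢ,eᵢ) = 0` and `hq` from invariance of `K(eₖ,eᵢ) = λ eⱼ`; the last one says that the
determinant is `1`. -/
theorem offdiag_zero {t p q r s : ℝ} (hpr : p * r = 0) (hq : t * r = q)
    (hdet : t * (p * s - q * r) = 1) : q = 0 ∧ r = 0 := by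
  by_cases hr : r = 0
  · exact ⟨by rw [← hq, hr, mul_zero], hr⟩
  · have hp : p = 0 := (mul_eq_zero.mp hpr).resolve_right hr
    -- the determinant has become `-(t * r) ^ 2`
    subst hp hq
    nlinarith [sq_nonneg (t * r)]

/-- A diagonal orthogonal matrix of determinant `1` is the identity or one of the `Pᵢ`. -/
theorem diag_mem_klein (m : Matrix (Fin 3) (Fin 3) ℝ)
    (hoff : ∀ i j, i ≠ j → m i j = 0) (hsq : ∀ i, m i i ^ 2 = 1) (hdet : m.det = 1) :
    m ∈ kleinMatSet := by
  have hm : m = !![m 0 0, 0, 0; 0, m 1 1, 0; 0, 0, m 2 2] := by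
    ext i j
    fin_cases i <;> fin_cases j <;> first | rfl | exact hoff _ _ (by decide)
  have hd : m 0 0 * m 1 1 * m 2 2 = 1 := by
    rw [hm, Matrix.det_fin_three] at hdet
    simpa using hdet
  have hone : (1 : Matrix (Fin 3) (Fin 3) ℝ) = !![1, 0, 0; 0, 1, 0; 0, 0, 1] :=
    Matrix.one_fin_three
  rw [hm]
  simp only [kleinMatSet, Set.mem_insert_iff, Set.mem_singleton_iff, P1mat, P2mat, P3mat, hone]
  rcases sq_eq_one_iff.mp (hsq 0) with h0 | h0 <;>
  rcases sq_eq_one_iff.mp (hsq 1) with h1 | h1 <;>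
  rcases sq_eq_one_iff.mp (hsq 2) with h2 | h2 <;>
  rw [h0, h1, h2] at hd ⊢ <;> first | (exfalso; norm_num at hd; done) | simp

/-- The matrix of an element of the stabilizer is `1` or one of the `Pᵢ`. -/
theorem mem_klein_of_mem_stab {K : V₃ →ₗ[ℝ] V₃ →ₗ[ℝ] V₃} {S : V₃ →ₗ[ℝ] V₃} {lam a b c : ℝ}
    (hK : ∀ X Y, K X Y = K Y X) (hform : OTForm K S stdB lam a b c)
    (hcond : (0 < lam ∧ ¬(a = b ∧ b = c)) ∨ (lam = 0 ∧ a ≠ b ∧ a ≠ c ∧ b ≠ c))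
    {g : V₃ ≃ₗᵢ[ℝ] V₃} (hg : g ∈ stab K S) : matrixOf stdB g ∈ kleinMatSet := by
  obtain ⟨hdet, hgK, hgS⟩ := hg
  rw [det_matrixOf] at hdet
  have hcol := matrixOf_col_norm g
  -- coordinates of `S (g eⱼ) = g (S eⱼ)`
  have hSc : ∀ j : Fin 3,
      a * matrixOf stdB g 0 j = ![a, b, c] j * matrixOf stdB g 0 j ∧
      b * matrixOf stdB g 1 j = ![a, b, c] j * matrixOf stdB g 1 j ∧
      c * matrixOf stdB g 2 j = ![a, b, c] j * matrixOf stdB g 2 j := by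
    intro j
    have hS' : S (stdB j) = ![a, b, c] j • stdB j := by
      obtain ⟨-, -, -, -, -, -, h0, h1, h2⟩ := hform
      fin_cases j
      exacts [h0, h1, h2]
    have h := hgS (stdB j)
    rw [hS', map_smul] at h
    have hc := hform.S_coord (g (stdB j))
    rw [h] at hc
    simp only [PiLp.smul_apply, smul_eq_mul] at hc
    simp only [matrixOf_stdB]
    exact ⟨hc.1.symm, hc.2.1.symm, hc.2.2.symm⟩
  -- coordinates of `K (g eⱼ) (g eⱼ) = 0`
  have hKd : lam ≠ 0 → ∀ j : Fin 3,
      matrixOf stdB g 1 j * matrixOf stdB g 2 j = 0 ∧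
      matrixOf stdB g 0 j * matrixOf stdB g 2 j = 0 ∧
      matrixOf stdB g 0 j * matrixOf stdB g 1 j = 0 := by
    intro hlam j
    have h0 : K (stdB j) (stdB j) = 0 := by
      obtain ⟨h0, h1, h2, -⟩ := hform
      fin_cases j
      exacts [h0, h1, h2]
    have h := hgK (stdB j) (stdB j)
    rw [h0, map_zero] at h
    obtain ⟨c0, c1, c2⟩ := hform.K_coord hK (g (stdB j)) (g (stdB j))
    rw [h] at c0 c1 c2
    simp only [PiLp.zero_apply, zero_eq_mul, hlam, false_or] at c0 c1 c2
    simp only [matrixOf_stdB]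
    refine ⟨?_, ?_, ?_⟩ <;> linarith
  -- coordinates of `K (g e₁) (g e₂) = λ g e₃` and of `K (g e₁) (g e₃) = λ g e₂`
  have hK01 : lam ≠ 0 →
      matrixOf stdB g 0 0 * matrixOf stdB g 2 1 + matrixOf stdB g 2 0 * matrixOf stdB g 0 1
        = matrixOf stdB g 1 2 ∧
      matrixOf stdB g 1 0 * matrixOf stdB g 2 1 + matrixOf stdB g 2 0 * matrixOf stdB g 1 1
        = matrixOf stdB g 0 2 := by
    intro hlam
    have h := hgK (stdB 0) (stdB 1)
    rw [hform.2.2.2.1, map_smul] at h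
    obtain ⟨c0, c1, -⟩ := hform.K_coord hK (g (stdB 0)) (g (stdB 1))
    rw [h] at c0 c1
    simp only [PiLp.smul_apply, smul_eq_mul] at c0 c1
    simp only [matrixOf_stdB]
    exact ⟨(mul_left_cancel₀ hlam c1).symm, (mul_left_cancel₀ hlam c0).symm⟩
  have hK02 : lam ≠ 0 →
      matrixOf stdB g 1 0 * matrixOf stdB g 2 2 + matrixOf stdB g 2 0 * matrixOf stdB g 1 2
        = matrixOf stdB g 0 1 := by
    intro hlam
    have h := hgK (stdB 0) (stdB 2)
    rw [hform.2.2.2.2.1, map_smul] at h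
    obtain ⟨c0, -, -⟩ := hform.K_coord hK (g (stdB 0)) (g (stdB 2))
    rw [h] at c0
    simp only [PiLp.smul_apply, smul_eq_mul] at c0
    simp only [matrixOf_stdB]
    exact (mul_left_cancel₀ hlam c0).symm
  generalize matrixOf stdB g = m at *
  have hdet' := hdet
  rw [Matrix.det_fin_three] at hdet'
  have ev : ∀ {x y z : ℝ}, x ≠ y → x * z = y * z → z = 0 := fun hxy h =>
    by_contra fun hz => hxy (mul_right_cancel₀ hz h)
  have s0 := hSc 0
  have s1 := hSc 1
  have s2 := hSc 2
  simp only [Matrix.cons_val] at s0 s1 s2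
  have key : (m 0 1 = 0 ∧ m 0 2 = 0) ∧ (m 1 0 = 0 ∧ m 1 2 = 0) ∧ (m 2 0 = 0 ∧ m 2 1 = 0) := by
    by_cases hab : a = b
    · obtain ⟨hl, hne⟩ : 0 < lam ∧ b ≠ c := by
        rcases hcond with ⟨h, h'⟩ | h
        exacts [⟨h, fun e => h' ⟨hab, e⟩⟩, absurd hab h.2.1]
      have hac : a ≠ c := hab ▸ hne
      have z02 := ev hac s2.1
      have z12 := ev hne s2.2.1
      have z20 := ev hac.symm s0.2.2
      have z21 := ev hne.symm s1.2.2
      have k := hK02 hl.ne'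
      have d0 := (hKd hl.ne' 0).2.2
      simp only [z02, z12, z20, z21] at k hdet'
      obtain ⟨z01, z10⟩ := offdiag_zero (t := m 2 2) (q := m 0 1) (s := m 1 1) d0
            (by linarith) (by linarith)
      exact ⟨⟨z01, z02⟩, ⟨z10, z12⟩, z20, z21⟩
    · have z01 := ev hab s1.1
      have z10 := ev (Ne.symm hab) s0.2.1
      by_cases hac : a = c
      · have hbc : b ≠ c := fun e => hab (hac.trans e.symm)
        have hl : 0 < lam := by
          rcases hcond with h | h
          exacts [h.1, absurd hac h.2.2.1]
        have z12 := ev hbc s2.2.1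
        have z21 := ev hbc.symm s1.2.2
        have k := (hK01 hl.ne').2
        have d0 := (hKd hl.ne' 0).2.1
        simp only [z01, z12, z10, z21] at k hdet'
        obtain ⟨z02, z20⟩ := offdiag_zero (t := m 1 1) (q := m 0 2) (s := m 2 2) d0
            (by linarith) (by linarith)
        exact ⟨⟨z01, z02⟩, ⟨z10, z12⟩, z20, z21⟩
      · have z02 := ev hac s2.1
        have z20 := ev (Ne.symm hac) s0.2.2
        by_cases hbc : b = c
        · have hl : 0 < lam := by
            rcases hcond with h | h
            exacts [h.1, absurd hbc h.2.2.2]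
          have k := (hK01 hl.ne').1
          have d1 := (hKd hl.ne' 1).1
          simp only [z01, z02, z10, z20] at k hdet'
          obtain ⟨z12, z21⟩ := offdiag_zero (t := m 0 0) (q := m 1 2) (s := m 2 2) d1
            (by linarith) (by linarith)
          exact ⟨⟨z01, z02⟩, ⟨z10, z12⟩, z20, z21⟩
        · exact ⟨⟨z01, z02⟩, ⟨z10, ev hbc s2.2.1⟩, z20, ev (Ne.symm hbc) s1.2.2⟩
  obtain ⟨⟨z01, z02⟩, ⟨z10, z12⟩, z20, z21⟩ := key
  refine diag_mem_klein m ?_ ?_ hdet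
  · intro i j hij
    fin_cases i <;> fin_cases j <;> first | exact absurd rfl hij | assumption
  · intro i
    have h := hcol i
    fin_cases i <;> simpa [z01, z02, z10, z12, z20, z21] using h

/-- An isometry with matrix in `kleinMatSet` changes the signs of an even number of coordinates. -/
theorem klein_coord {g : V₃ ≃ₗᵢ[ℝ] V₃} (hg : matrixOf stdB g ∈ kleinMatSet) :
    ∃ s₀ s₁ s₂ : ℝ, s₀ * s₀ = 1 ∧ s₁ * s₁ = 1 ∧ s₂ * s₂ = 1 ∧
      s₀ * s₁ = s₂ ∧ s₀ * s₂ = s₁ ∧ s₁ * s₂ = s₀ ∧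
      ∀ X, g X 0 = s₀ * X 0 ∧ g X 1 = s₁ * X 1 ∧ g X 2 = s₂ * X 2 := by
  simp only [kleinMatSet, Set.mem_insert_iff, Set.mem_singleton_iff] at hg
  rcases hg with h | h | h | h
  · refine ⟨1, 1, 1, ?_⟩
    simp [apply_coord, h]
  · refine ⟨1, -1, -1, ?_⟩
    simp [apply_coord, h, P1mat]
  · refine ⟨-1, 1, -1, ?_⟩
    simp [apply_coord, h, P2mat]
  · refine ⟨-1, -1, 1, ?_⟩
    simp [apply_coord, h, P3mat]

theorem klein_det {m : Matrix (Fin 3) (Fin 3) ℝ} (hm : m ∈ kleinMatSet) : m.det = 1 := by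
  simp only [kleinMatSet, Set.mem_insert_iff, Set.mem_singleton_iff] at hm
  rcases hm with rfl | rfl | rfl | rfl <;>
    simp [P1mat, P2mat, P3mat, Matrix.det_fin_three]

theorem mem_stab_of_mem_klein {K : V₃ →ₗ[ℝ] V₃ →ₗ[ℝ] V₃} {S : V₃ →ₗ[ℝ] V₃} {lam a b c : ℝ}
    (hK : ∀ X Y, K X Y = K Y X) (hform : OTForm K S stdB lam a b c)
    {g : V₃ ≃ₗᵢ[ℝ] V₃} (hg : matrixOf stdB g ∈ kleinMatSet) : g ∈ stab K S := by
  refine ⟨by rw [det_matrixOf, klein_det hg], ?_, ?_⟩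
  · obtain ⟨s₀, s₁, s₂, -, -, -, h01, h02, h12, hc⟩ := klein_coord hg
    intro X Y
    obtain ⟨k0, k1, k2⟩ := hform.K_coord hK (g X) (g Y)
    obtain ⟨l0, l1, l2⟩ := hform.K_coord hK X Y
    obtain ⟨g0, g1, g2⟩ := hc (K X Y)
    obtain ⟨x0, x1, x2⟩ := hc X
    obtain ⟨y0, y1, y2⟩ := hc Y
    ext i
    fin_cases i
    · change K (g X) (g Y) 0 = g (K X Y) 0
      rw [k0, g0, l0, x1, x2, y1, y2, ← h12]; ring
    · change K (g X) (g Y) 1 = g (K X Y) 1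
      rw [k1, g1, l1, x0, x2, y0, y2, ← h02]; ring
    · change K (g X) (g Y) 2 = g (K X Y) 2
      rw [k2, g2, l2, x0, x1, y0, y1, ← h01]; ring
  · obtain ⟨s₀, s₁, s₂, -, -, -, -, -, -, hc⟩ := klein_coord hg
    intro X
    obtain ⟨k0, k1, k2⟩ := hform.S_coord (g X)
    obtain ⟨l0, l1, l2⟩ := hform.S_coord X
    obtain ⟨g0, g1, g2⟩ := hc (S X)
    obtain ⟨x0, x1, x2⟩ := hc X
    ext i
    fin_cases i
    · change S (g X) 0 = g (S X) 0
      rw [k0, g0, l0, x0]; ring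
    · change S (g X) 1 = g (S X) 1
      rw [k1, g1, l1, x1]; ring
    · change S (g X) 2 = g (S X) 2
      rw [k2, g2, l2, x2]; ring

theorem klein_mul_self {g : V₃ ≃ₗᵢ[ℝ] V₃} (hg : matrixOf stdB g ∈ kleinMatSet) : g * g = 1 := by
  obtain ⟨s₀, s₁, s₂, h0, h1, h2, -, -, -, hc⟩ := klein_coord hg
  ext X i
  obtain ⟨x0, x1, x2⟩ := hc X
  obtain ⟨y0, y1, y2⟩ := hc (g X)
  fin_cases i
  · change g (g X) 0 = X 0
    rw [y0, x0, ← mul_assoc, h0, one_mul]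
  · change g (g X) 1 = X 1
    rw [y1, x1, ← mul_assoc, h1, one_mul]
  · change g (g X) 2 = X 2
    rw [y2, x2, ← mul_assoc, h2, one_mul]

/-- The isometry negating the coordinates `i` with `s i = true`. -/
def signIso (s : Fin 3 → Bool) : V₃ ≃ₗᵢ[ℝ] V₃ :=
  LinearIsometryEquiv.piLpCongrRight 2 fun i =>
    if s i then LinearIsometryEquiv.neg ℝ else LinearIsometryEquiv.refl ℝ ℝ

theorem matrixOf_signIso (s : Fin 3 → Bool) :
    matrixOf stdB (signIso s) = Matrix.diagonal fun i => if s i then (-1 : ℝ) else 1 := by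
  ext i j
  rw [matrixOf_stdB, Matrix.diagonal_apply]
  simp only [signIso, LinearIsometryEquiv.piLpCongrRight_apply, stdB_apply]
  split_ifs <;> simp

theorem kleinMatSet_subset_range : kleinMatSet ⊆ Set.range (matrixOf stdB) := by
  intro m hm
  simp only [kleinMatSet, Set.mem_insert_iff, Set.mem_singleton_iff] at hm
  rcases hm with rfl | rfl | rfl | rfl
  · refine ⟨signIso ![false, false, false], ?_⟩
    rw [matrixOf_signIso]
    ext i j
    fin_cases i <;> fin_cases j <;> simp
  · refine ⟨signIso ![false, true, true], ?_⟩
    rw [matrixOf_signIso]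
    ext i j
    fin_cases i <;> fin_cases j <;> simp [P1mat]
  · refine ⟨signIso ![true, false, true], ?_⟩
    rw [matrixOf_signIso]
    ext i j
    fin_cases i <;> fin_cases j <;> simp [P2mat]
  · refine ⟨signIso ![true, true, false], ?_⟩
    rw [matrixOf_signIso]
    ext i j
    fin_cases i <;> fin_cases j <;> simp [P3mat]

theorem ncard_kleinMatSet : kleinMatSet.ncard = 4 := by
  have sep : ∀ {m n : Matrix (Fin 3) (Fin 3) ℝ} (i : Fin 3), m i i ≠ n i i → m ≠ n :=
    fun i h e => h (by rw [e])
  have h01 : (1 : Matrix (Fin 3) (Fin 3) ℝ) ≠ P1mat := sep 1 (by norm_num [P1mat])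
  have h02 : (1 : Matrix (Fin 3) (Fin 3) ℝ) ≠ P2mat := sep 0 (by norm_num [P2mat])
  have h03 : (1 : Matrix (Fin 3) (Fin 3) ℝ) ≠ P3mat := sep 0 (by norm_num [P3mat])
  have h12 : P1mat ≠ P2mat := sep 0 (by norm_num [P1mat, P2mat])
  have h13 : P1mat ≠ P3mat := sep 0 (by norm_num [P1mat, P3mat])
  have h23 : P2mat ≠ P3mat := sep 1 (by norm_num [P2mat, P3mat])
  rw [kleinMatSet, Set.ncard_insert_of_notMem, Set.ncard_insert_of_notMem, Set.ncard_pair h23]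
  · simp [h12, h13]
  · simp [h01, h02, h03]

/-- The stabilizer as a subgroup of the isometry group. -/
def stabSubgroup (K : V₃ →ₗ[ℝ] V₃ →ₗ[ℝ] V₃) (S : V₃ →ₗ[ℝ] V₃) : Subgroup (V₃ ≃ₗᵢ[ℝ] V₃) where
  carrier := stab K S
  one_mem' := ⟨LinearMap.det_id, fun _ _ => rfl, fun _ => rfl⟩
  mul_mem' := by
    rintro g g' ⟨hd, hK, hS⟩ ⟨hd', hK', hS'⟩
    refine ⟨?_, fun X Y => ?_, fun X => ?_⟩
    · have h := LinearMap.det_comp (g.toLinearEquiv : V₃ →ₗ[ℝ] V₃)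
        (g'.toLinearEquiv : V₃ →ₗ[ℝ] V₃)
      rw [hd, hd', one_mul] at h
      exact h
    · change K (g (g' X)) (g (g' Y)) = g (g' (K X Y))
      rw [hK, hK']
    · change S (g (g' X)) = g (g' (S X))
      rw [hS, hS']
  inv_mem' := by
    rintro g ⟨hd, hK, hS⟩
    refine ⟨?_, fun X Y => ?_, fun X => ?_⟩
    · have h := LinearEquiv.det_mul_det_symm g.toLinearEquiv
      rw [hd, one_mul] at h
      exact h
    · change K (g.symm X) (g.symm Y) = g.symm (K X Y)
      apply g.injective
      rw [← hK]
      simp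
    · change S (g.symm X) = g.symm (S X)
      apply g.injective
      rw [← hS]
      simp

/-- if `(K,S)` is in orthogonal-triple canonical form with parameters
`(λ,a,b,c)`, where either `λ > 0` and `a,b,c` are not all equal, or `λ = 0` and `a,b,c`
are pairwise distinct, then the stabilizer of `(K,S)` in `SO(3)` is exactly the order-4
subgroup `{id, P₁, P₂, P₃}`, which is isomorphic to `Z₂ × Z₂`. -/
theorem statement_11 (K : V₃ →ₗ[ℝ] V₃ →ₗ[ℝ] V₃) (S : V₃ →ₗ[ℝ] V₃)
    (hK : IsAdmissibleK K) (hS : IsSymmEndo S)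
    (lam a b c : ℝ) (hform : OTForm K S stdB lam a b c)
    (hcond : (0 < lam ∧ ¬(a = b ∧ b = c)) ∨
             (lam = 0 ∧ a ≠ b ∧ a ≠ c ∧ b ≠ c)) :
    stab K S = {g | matrixOf stdB g ∈ kleinMatSet} ∧
    ∃ H : Subgroup (V₃ ≃ₗᵢ[ℝ] V₃), (H : Set (V₃ ≃ₗᵢ[ℝ] V₃)) = stab K S ∧
      Nonempty (H ≃* (Multiplicative (ZMod 2) × Multiplicative (ZMod 2))) := by
  have hset : stab K S = {g | matrixOf stdB g ∈ kleinMatSet} :=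
    Set.ext fun _ => ⟨mem_klein_of_mem_stab hK.1 hform hcond, mem_stab_of_mem_klein hK.1 hform⟩
  refine ⟨hset, stabSubgroup K S, rfl, ?_⟩
  have hcard : Nat.card (stabSubgroup K S) = 4 := by
    change (stab K S).ncard = 4
    rw [hset, ← ncard_kleinMatSet]
    exact Set.ncard_preimage_of_injective_subset_range matrixOf_injective kleinMatSet_subset_range
  have hexp : Monoid.exponent (stabSubgroup K S) = 2 := by
    have : Nontrivial (stabSubgroup K S) := by
      have : Finite (stabSubgroup K S) := Nat.finite_of_card_ne_zero (by omega)
      rw [← Finite.one_lt_card_iff_nontrivial]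
      omega
    refine Monoid.exponent_eq_prime_iff Nat.prime_two |>.mpr fun g hg => ?_
    refine orderOf_eq_prime ?_ hg
    have hmem : (g : V₃ ≃ₗᵢ[ℝ] V₃) ∈ stab K S := g.2
    rw [hset] at hmem
    rw [pow_two]
    exact Subtype.ext (klein_mul_self hmem)
  have : IsKleinFour (stabSubgroup K S) := ⟨hcard, hexp⟩
  have : IsKleinFour (Multiplicative (ZMod 2) × Multiplicative (ZMod 2)) :=
    ⟨by simp, by simp [Monoid.exponent_prod]⟩
  exact IsKleinFour.nonempty_mulEquiv
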